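/- Let C be ℝ or ℝ_{≥0}, let ψ : C → ℝ be strictly convex, twice differentiable on int(C), with x ↦ ψ'(x)x − ψ(x) coercive and ψ' odd when C = ℝ (ψ'(0) ≥ 0 when C = ℝ_{≥0}); let α > 0 and C_K ∈ (0,1). Suppose x ∈ C and z ∈ ∂h(x) satisfy |z| < C_K(ψ'(α) − ψ'(0)) + ψ'(0). Then for every x' ∈ C with x' ≠ x and every z' ∈ ∂h(x'), one has (z − z')(x − x') > (1 − C_K)(ψ'(x) − ψ'(x'))(x − x'). -/

import Mathlib

open Classical

noncomputable section

/-- `‖x‖₀`: the number of nonzero entries of a vector. -/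
def norm0 {ι : Type*} [Fintype ι] (x : ι → ℝ) : ℕ :=
  (Finset.univ.filter fun i => x i ≠ 0).card

/-- Euclidean inner product on `ι → ℝ`. -/
def dotp {ι : Type*} [Fintype ι] (x y : ι → ℝ) : ℝ := ∑ i, x i * y i

/-- squared Euclidean norm. -/
def sqnorm {ι : Type*} [Fintype ι] (x : ι → ℝ) : ℝ := ∑ i, (x i) ^ 2

/-- Euclidean norm. -/
def enorm2 {ι : Type*} [Fintype ι] (x : ι → ℝ) : ℝ := Real.sqrt (sqnorm x)

/-- the subdifferential `∂h` of `h = β_ψ + ψ` (Clarke subdifferential, closed form). -/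
def subdiffH (𝒞 : Set ℝ) (dψ : ℝ → ℝ) (α : ℝ) (t : ℝ) : Set ℝ :=
  if 𝒞 = Set.univ then
    if t = 0 then Set.Icc (-(dψ α)) (dψ α)
    else if |t| ≤ α then {Real.sign t * dψ α}
    else {dψ t}
  else
    if t ≤ α then {dψ α} else {dψ t}

/-!
Write `g` for `ψ'`. On `ℝ≥0`, and at positive points when `𝒞 = ℝ`, the set `∂h(t)` is the single
value `g (max α t)`, which dominates both `g α` and `g t`. The smallness of `z` therefore rules out
`𝒞 = ℝ≥0` and forces `x = 0` when `𝒞 = ℝ`. There `g 0 = 0`, and by oddness it is enough to compare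
`z` with `w ∈ ∂h(t)` for `t > 0`, where splitting `w` in the proportion `1 - CK : CK` gives
`w = (1 - CK) w + CK w ≥ (1 - CK) g t + CK g α > (1 - CK) g t + z`.
-/

theorem monotoneOn_of_convexOn_of_hasDerivWithinAt {S : Set ℝ} {f f' : ℝ → ℝ}
    (hf : ConvexOn ℝ S f) (hf' : ∀ t ∈ S, HasDerivWithinAt f (f' t) S t) : MonotoneOn f' S := by
  intro a ha b hb hab
  rcases hab.eq_or_lt with rfl | hlt
  · rfl
  · exact (hf.le_slope_of_hasDerivWithinAt ha hb hlt (hf' a ha)).trans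
      (hf.slope_le_of_hasDerivWithinAt ha hb hlt (hf' b hb))

section SubdiffH

variable {𝒞 : Set ℝ} {g : ℝ → ℝ} {α C t w z : ℝ}

theorem subdiffH_of_ne_univ (h𝒞 : 𝒞 ≠ Set.univ) : subdiffH 𝒞 g α t = {g (max α t)} := by
  rcases le_or_gt t α with h | h
  · simp [subdiffH, h𝒞, h]
  · simp [subdiffH, h𝒞, h.not_ge, h.le]

theorem subdiffH_univ_of_pos (ht : 0 < t) : subdiffH Set.univ g α t = {g (max α t)} := by
  rcases le_or_gt t α with h | h
  · simp [subdiffH, ht.ne', abs_of_pos ht, Real.sign_of_pos ht, h]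
  · simp [subdiffH, ht.ne', abs_of_pos ht, h.not_ge, h.le]

theorem neg_mem_subdiffH_univ_neg (hodd : Function.Odd g) (hw : w ∈ subdiffH Set.univ g α t) :
    -w ∈ subdiffH Set.univ g α (-t) := by
  simp only [subdiffH, if_true, neg_eq_zero, abs_neg, Real.sign_neg, hodd.eq t] at hw ⊢
  split_ifs at hw ⊢
  · exact ⟨neg_le_neg hw.2, neg_le.mp hw.1⟩
  · simpa using hw
  · simpa using hw

theorem apply_le_and_apply_le_of_mem_subdiffH_univ_of_pos (hg : Monotone g) (ht : 0 < t)
    (hw : w ∈ subdiffH Set.univ g α t) : g α ≤ w ∧ g t ≤ w := by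
  rw [subdiffH_univ_of_pos ht, Set.mem_singleton_iff] at hw
  subst hw
  exact ⟨hg (le_max_left α t), hg (le_max_right α t)⟩

theorem apply_le_abs_of_mem_subdiffH_univ (hg : Monotone g) (hodd : Function.Odd g) (ht : t ≠ 0)
    (hw : w ∈ subdiffH Set.univ g α t) : g α ≤ |w| := by
  rcases ht.lt_or_gt with hneg | hpos
  · have hw' := neg_mem_subdiffH_univ_neg hodd hw
    exact (apply_le_and_apply_le_of_mem_subdiffH_univ_of_pos hg (neg_pos.mpr hneg) hw').1.trans
      (neg_le_abs w)
  · exact (apply_le_and_apply_le_of_mem_subdiffH_univ_of_pos hg hpos hw).1.trans (le_abs_self w)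

theorem one_sub_mul_lt_sub_of_mem_subdiffH_univ_of_pos (hg : Monotone g) (hC0 : 0 ≤ C)
    (hC1 : C ≤ 1) (hz : z < C * g α) (ht : 0 < t) (hw : w ∈ subdiffH Set.univ g α t) :
    (1 - C) * g t < w - z := by
  obtain ⟨hαw, htw⟩ := apply_le_and_apply_le_of_mem_subdiffH_univ_of_pos hg ht hw
  calc
    (1 - C) * g t ≤ (1 - C) * w := mul_le_mul_of_nonneg_left htw (sub_nonneg.mpr hC1)
    _ = w - C * w := by ring
    _ ≤ w - C * g α := sub_le_sub_left (mul_le_mul_of_nonneg_left hαw hC0) w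
    _ < w - z := sub_lt_sub_left hz w

theorem one_sub_mul_mul_lt_sub_mul_of_mem_subdiffH_univ (hg : Monotone g)
    (hodd : Function.Odd g) (hC0 : 0 ≤ C) (hC1 : C ≤ 1) (hz : |z| < C * g α) (ht : t ≠ 0)
    (hw : w ∈ subdiffH Set.univ g α t) : (1 - C) * (g t * t) < (w - z) * t := by
  obtain ⟨hz_neg, hz_pos⟩ := abs_lt.mp hz
  rcases ht.lt_or_gt with hneg | hpos
  · have hlt : (1 - C) * g (-t) < -w - -z :=
      one_sub_mul_lt_sub_of_mem_subdiffH_univ_of_pos hg hC0 hC1 (neg_lt.mp hz_neg)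
        (neg_pos.mpr hneg) (neg_mem_subdiffH_univ_neg hodd hw)
    rw [hodd.eq] at hlt
    linarith [mul_lt_mul_of_pos_right hlt (neg_pos.mpr hneg)]
  · have hlt : (1 - C) * g t < w - z :=
      one_sub_mul_lt_sub_of_mem_subdiffH_univ_of_pos hg hC0 hC1 hz_pos hpos hw
    linarith [mul_lt_mul_of_pos_right hlt hpos]

theorem apply_le_of_mem_subdiffH_Ici (hg : MonotoneOn g (Set.Ici 0)) (hα : 0 ≤ α)
    (hw : w ∈ subdiffH (Set.Ici 0) g α t) : g α ≤ w := by
  have hne : Set.Ici (0 : ℝ) ≠ Set.univ := fun h => not_bddBelow_univ (h ▸ bddBelow_Ici)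
  rw [subdiffH_of_ne_univ hne, Set.mem_singleton_iff] at hw
  subst hw
  exact hg hα (le_max_of_le_left hα) (le_max_left α t)

end SubdiffH

theorem stmt7_general {𝒞 : Set ℝ} (h𝒞 : 𝒞 = Set.univ ∨ 𝒞 = Set.Ici 0) {g : ℝ → ℝ} {α CK : ℝ}
    (hα : 0 ≤ α) (hCK : CK ≤ 1) (hg : MonotoneOn g 𝒞) (hodd : 𝒞 = Set.univ → Function.Odd g)
    {x x' z z' : ℝ} (hne : x' ≠ x) (hz : z ∈ subdiffH 𝒞 g α x) (hz' : z' ∈ subdiffH 𝒞 g α x')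
    (hzsmall : |z| < CK * (g α - g 0) + g 0) :
    (1 - CK) * ((g x - g x') * (x - x')) < (z - z') * (x - x') := by
  have hgap : 0 ≤ g α - g 0 := by
    rcases h𝒞 with rfl | rfl
    · exact sub_nonneg.mpr (hg trivial trivial hα)
    · exact sub_nonneg.mpr (hg Set.self_mem_Ici hα hα)
  have hzα : |z| < g α := by linarith [mul_le_of_le_one_left hgap hCK]
  rcases h𝒞 with rfl | rfl
  · have hmono : Monotone g := monotoneOn_univ.mp hg
    have hg0 : g 0 = 0 := (hodd rfl).map_zero
    obtain rfl : x = 0 := by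
      by_contra hx
      exact (apply_le_abs_of_mem_subdiffH_univ hmono (hodd rfl) hx hz).not_gt hzα
    rw [hg0, sub_zero, add_zero] at hzsmall
    have hCK0 : 0 ≤ CK :=
      (pos_of_mul_pos_left ((abs_nonneg z).trans_lt hzsmall) ((abs_nonneg z).trans hzα.le)).le
    have hmul : (1 - CK) * (g x' * x') < (z' - z) * x' :=
      one_sub_mul_mul_lt_sub_mul_of_mem_subdiffH_univ hmono (hodd rfl) hCK0 hCK hzsmall hne hz'
    rw [hg0]
    linarith
  · exact absurd hzα ((apply_le_of_mem_subdiffH_Ici hg hα hz).trans (le_abs_self z)).not_gt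

/-- Lemma for small `|z|`. -/
theorem stmt7
    (𝒞 : Set ℝ) (h𝒞 : 𝒞 = Set.univ ∨ 𝒞 = Set.Ici 0)
    (ψ dψ : ℝ → ℝ) (α CK : ℝ) (hα : 0 < α) (hCK0 : 0 < CK) (hCK1 : CK < 1)
    -- `ψ` strictly convex with derivative `dψ` on `𝒞`, twice differentiable on `int 𝒞`
    (hconv : StrictConvexOn ℝ 𝒞 ψ)
    (hderiv : ∀ t ∈ 𝒞, HasDerivWithinAt ψ (dψ t) 𝒞 t)
    (hderiv2 : ∀ t ∈ interior 𝒞, DifferentiableAt ℝ dψ t)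
    -- coercivity of `t ↦ ψ'(t)t - ψ(t)`
    (hcoer : ∀ c : ℝ, ∃ R : ℝ, ∀ t ∈ 𝒞, R ≤ |t| → c ≤ dψ t * t - ψ t)
    -- `ψ'` odd when `𝒞 = ℝ`, `ψ'(0) ≥ 0` when `𝒞 = ℝ_{≥0}`
    (hodd : 𝒞 = Set.univ → ∀ t, dψ (-t) = -dψ t)
    (hnn : 𝒞 = Set.Ici 0 → 0 ≤ dψ 0)
    (x z : ℝ) (hx : x ∈ 𝒞) (hz : z ∈ subdiffH 𝒞 dψ α x)
    (hzsmall : |z| < CK * (dψ α - dψ 0) + dψ 0) :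
    ∀ x' ∈ 𝒞, x' ≠ x → ∀ z' ∈ subdiffH 𝒞 dψ α x',
      (1 - CK) * ((dψ x - dψ x') * (x - x')) < (z - z') * (x - x') := by
  exact fun x' _ hne z' hz' => stmt7_general h𝒞 hα.le hCK1.le
    (monotoneOn_of_convexOn_of_hasDerivWithinAt hconv.convexOn hderiv) hodd hne hz hz' hzsmall
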